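/- For almost all real numbers ξ with respect to Lebesgue measure, one has τ'''(ξ) = τ''(ξ) = τ'(ξ) = τ(ξ) = 1, where these exponents are the suprema (with sup ∅ = 0) of the sets T'''(ξ) ⊂ T''(ξ) ⊂ T'(ξ) ⊂ T(ξ) defined as follows: T(ξ) is the set of τ > 0 for which there exist integer sequences (u_n), (v_n) with u_n ≠ 0, u_n ξ − v_n → 0, |u_{n+1} ξ − v_{n+1}| = |u_n ξ − v_n|^{1+o(1)} and |u_n ξ − v_n| ≤ |u_n|^{−τ+o(1)}; T'(ξ) is the set of τ > 0 for which there exist integer sequences (u_n), (v_n) and reals 0 < α < 1 < β with |u_n ξ − v_n|^{1/n} → α, limsup |u_n|^{1/n} ≤ β and τ = −(log α)/(log β); T''(ξ) is the set of τ > 0 such that for every increasing sequence (Q_n) of positive integers there exist integer sequences (u_n), (v_n) with |u_n| ≤ Q_n^{1+o(1)} and |u_n ξ − v_n| = Q_n^{−τ+o(1)}; T'''(ξ) is the set of τ > 0 such that for all sequences (Q_n), (ε_n) of positive reals with Q_n → +∞, ε_n → 0 and ε_n ≥ Q_n^{−τ+o(1)}, there exist integer sequences (u_n), (v_n) with u_n/Q_n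 → 1 and (u_n ξ − v_n)/ε_n → 1. -/

import Mathlib

/-!
Almost every `ξ` is irrational and not `LiouvilleWith p` for any `p > 2`, so that
`|u ξ - v| ≥ c |u| ^ (-(1 + η))` for all integers `u ≠ 0`, `v` (`IsGenericReal`). The sets
always form a chain `TSet''' ξ ⊆ TSet'' ξ ⊆ TSet' ξ ⊆ TSet ξ`, by specialising `ε n = Q n ^ (-τ)`,
then `Q n = 2 ^ n`, then comparing logarithms. For generic `ξ` the two ends
of the chain are bounded as follows.

* `TSet ξ ⊆ (0, 1]` (`IsGenericReal.le_one_of_mem_TSet`): an element `τ > 1` would give linear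
  forms `|u ξ - v| ≤ |u| ^ (-τ + o(1))` tending to `0`, against the lower bound above.
* `(0, 1) ⊆ TSet''' ξ` (`IsGenericReal.mem_TSet'''`): Dirichlet's theorem provides a reduced
  fraction `p / q` with `|ξ - p / q| ≤ 1 / q ^ 2` and `q ≤ Q ^ σ`, `σ < 1`, and the lower bound on
  linear forms makes `q` at least a constant times `Q ^ ρ`, where `τ < ρ < σ`. Choosing `u` within
  `q` of `Q` in a suitable residue class modulo `q` puts `u ξ - v` within `2 / q` of `ε`
  (`exists_int_near_of_rat`), and these errors are negligible compared with `Q` and `ε`.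
-/

open Filter Topology

/-- The irrationality exponent of a real number, as an extended real:
the infimum of all real `μ` such that `|ξ - p/q| > 1/q^μ` for all integers `p, q`
with `q` sufficiently large (`⊤` if no such real `μ` exists). -/
noncomputable def irrationalityExponent (ξ : ℝ) : EReal :=
  sInf {x : EReal | ∃ μ : ℝ, x = (μ : EReal) ∧
    ∀ᶠ q : ℕ in atTop, ∀ p : ℤ, |ξ - (p : ℝ) / (q : ℝ)| > 1 / (q : ℝ) ^ μ}

/-- The set `T(ξ)` of all `τ > 0` for which there exist integer sequences `(u_n)`, `(v_n)`
with `u_n ≠ 0`, `u_n ξ - v_n → 0`, `|u_{n+1} ξ - v_{n+1}| = |u_n ξ - v_n|^{1+o(1)}` and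
`|u_n ξ - v_n| ≤ |u_n|^{-τ+o(1)}`. -/
def TSet (ξ : ℝ) : Set ℝ :=
  {τ : ℝ | 0 < τ ∧ ∃ u v : ℕ → ℤ, (∀ n, u n ≠ 0) ∧
    Tendsto (fun n => (u n : ℝ) * ξ - (v n : ℝ)) atTop (𝓝 0) ∧
    (∃ δ : ℕ → ℝ, Tendsto δ atTop (𝓝 0) ∧ ∀ n,
      |(u (n + 1) : ℝ) * ξ - (v (n + 1) : ℝ)| = |(u n : ℝ) * ξ - (v n : ℝ)| ^ (1 + δ n)) ∧
    (∃ δ : ℕ → ℝ, Tendsto δ atTop (𝓝 0) ∧ ∀ n,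
      |(u n : ℝ) * ξ - (v n : ℝ)| ≤ |(u n : ℝ)| ^ (-τ + δ n))}

/-- The set `T'(ξ)` of all `τ > 0` for which there exist integer sequences `(u_n)`, `(v_n)`
and `0 < α < 1 < β` with `|u_n ξ - v_n|^{1/n} → α`, `limsup |u_n|^{1/n} ≤ β` and
`τ = -log α / log β`. -/
def TSet' (ξ : ℝ) : Set ℝ :=
  {τ : ℝ | 0 < τ ∧ ∃ u v : ℕ → ℤ, ∃ α β : ℝ, 0 < α ∧ α < 1 ∧ 1 < β ∧
    Tendsto (fun n => |(u n : ℝ) * ξ - (v n : ℝ)| ^ (1 / (n : ℝ))) atTop (𝓝 α) ∧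
    limsup (fun n => ((|(u n : ℝ)| ^ (1 / (n : ℝ)) : ℝ) : EReal)) atTop ≤ (β : EReal) ∧
    τ = -Real.log α / Real.log β}

/-- The set `T''(ξ)` of all `τ > 0` such that, for any increasing sequence `(Q_n)` of
positive integers, there exist integer sequences `(u_n)`, `(v_n)` with
`|u_n| ≤ Q_n^{1+o(1)}` and `|u_n ξ - v_n| = Q_n^{-τ+o(1)}`. -/
def TSet'' (ξ : ℝ) : Set ℝ :=
  {τ : ℝ | 0 < τ ∧ ∀ Q : ℕ → ℕ, StrictMono Q → (∀ n, 0 < Q n) →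
    ∃ u v : ℕ → ℤ,
      (∃ δ : ℕ → ℝ, Tendsto δ atTop (𝓝 0) ∧ ∀ n,
        |(u n : ℝ)| ≤ (Q n : ℝ) ^ (1 + δ n)) ∧
      (∃ δ : ℕ → ℝ, Tendsto δ atTop (𝓝 0) ∧ ∀ n,
        |(u n : ℝ) * ξ - (v n : ℝ)| = (Q n : ℝ) ^ (-τ + δ n))}

/-- The set `T'''(ξ)` of all `τ > 0` such that, for any sequences `(Q_n)`, `(ε_n)` of
positive real numbers with `Q_n → ∞`, `ε_n → 0` and `ε_n ≥ Q_n^{-τ+o(1)}`, there exist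
integer sequences `(u_n)`, `(v_n)` with `u_n / Q_n → 1` and `(u_n ξ - v_n)/ε_n → 1`. -/
def TSet''' (ξ : ℝ) : Set ℝ :=
  {τ : ℝ | 0 < τ ∧ ∀ Q ε : ℕ → ℝ, (∀ n, 0 < Q n) → (∀ n, 0 < ε n) →
    Tendsto Q atTop atTop → Tendsto ε atTop (𝓝 0) →
    (∃ δ : ℕ → ℝ, Tendsto δ atTop (𝓝 0) ∧ ∀ n, ε n ≥ Q n ^ (-τ + δ n)) →
    ∃ u v : ℕ → ℤ,
      Tendsto (fun n => (u n : ℝ) / Q n) atTop (𝓝 1) ∧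
      Tendsto (fun n => ((u n : ℝ) * ξ - (v n : ℝ)) / ε n) atTop (𝓝 1)}

/-- `τ(ξ) = sup T(ξ)` (with `sup ∅ = 0`, as for the real `sSup`). -/
noncomputable def tauExp (ξ : ℝ) : ℝ := sSup (TSet ξ)

/-- `τ'(ξ) = sup T'(ξ)` (with `sup ∅ = 0`, as for the real `sSup`). -/
noncomputable def tauExp' (ξ : ℝ) : ℝ := sSup (TSet' ξ)

/-- `τ''(ξ) = sup T''(ξ)` (with `sup ∅ = 0`, as for the real `sSup`). -/
noncomputable def tauExp'' (ξ : ℝ) : ℝ := sSup (TSet'' ξ)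

/-- `τ'''(ξ) = sup T'''(ξ)` (with `sup ∅ = 0`, as for the real `sSup`). -/
noncomputable def tauExp''' (ξ : ℝ) : ℝ := sSup (TSet''' ξ)

/-! ### The lower bound for linear forms at almost every point -/

/-- `ξ` has irrationality exponent at most `2`, in a form uniform in the denominator: for each
`η > 0` all linear forms `u ξ - v` with `u ≠ 0` are at least `c |u| ^ (-(1 + η))`, where `c > 0`
depends only on `ξ` and `η`. Taking `u ξ = v` shows that such a `ξ` is irrational. -/
def IsGenericReal (ξ : ℝ) : Prop :=
  ∀ η : ℝ, 0 < η → ∃ c : ℝ, 0 < c ∧ ∀ u v : ℤ, u ≠ 0 →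
    c * |(u : ℝ)| ^ (-(1 + η)) ≤ |(u : ℝ) * ξ - v|

lemma exists_pos_le_of_finite (f : ℕ → ℝ) (N : ℕ) (hf : ∀ n, 0 < n → 0 < f n) :
    ∃ c : ℝ, 0 < c ∧ ∀ n, 0 < n → n < N → c ≤ f n := by
  induction N with
  | zero => exact ⟨1, one_pos, fun n _ h => absurd h (Nat.not_lt_zero _)⟩
  | succ N ih =>
    obtain ⟨c, hc, h⟩ := ih
    rcases Nat.eq_zero_or_pos N with rfl | hN
    · exact ⟨c, hc, fun n h1 h2 => by omega⟩
    · refine ⟨min c (f N), lt_min hc (hf N hN), fun n h1 h2 => ?_⟩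
      rcases Nat.lt_succ_iff_lt_or_eq.1 h2 with h3 | rfl
      · exact (min_le_left _ _).trans (h n h1 h3)
      · exact min_le_right _ _

lemma isGenericReal_of_not_liouvilleWith {ξ : ℝ} (hirr : Irrational ξ)
    (h : ∀ p > (2 : ℝ), ¬ LiouvilleWith p ξ) : IsGenericReal ξ := by
  intro η hη
  have h1 := h (2 + η) (by linarith)
  unfold LiouvilleWith at h1
  push Not at h1
  obtain ⟨N, hN⟩ := eventually_atTop.1 (h1 1)
  -- the finitely many small denominators are handled by the distance to the nearest integer
  obtain ⟨c, hc, hcN⟩ := exists_pos_le_of_finite (fun n => |(n : ℝ) * ξ - round ((n : ℝ) * ξ)|) N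
    (fun n hn => abs_pos.2 (sub_ne_zero.2 ((hirr.natCast_mul hn.ne').ne_int _)))
  have key : ∀ (n : ℕ) (v : ℤ), 0 < n →
      min c 1 * (n : ℝ) ^ (-(1 + η)) ≤ |(n : ℝ) * ξ - v| := by
    intro n v hn
    have hn1 : (1 : ℝ) ≤ n := by exact_mod_cast hn
    have hn0 : (0 : ℝ) < n := by linarith
    rcases lt_or_ge n N with hlt | hge
    · calc min c 1 * (n : ℝ) ^ (-(1 + η)) ≤ c * 1 := by
            apply mul_le_mul (min_le_left _ _) _ (by positivity) hc.le
            exact Real.rpow_le_one_of_one_le_of_nonpos hn1 (by linarith)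
        _ ≤ _ := by rw [mul_one]; exact (hcN n hn hlt).trans (round_le _ _)
    · have h2 := hN n hge v (by
        intro h3
        apply (hirr.natCast_mul hn.ne').ne_int v
        rw [h3]; field_simp)
      have h4 : |(n : ℝ) * ξ - v| = n * |ξ - v / n| := by
        rw [← abs_of_pos hn0, ← abs_mul, abs_of_pos hn0]; congr 1; field_simp
      rw [h4]
      calc min c 1 * (n : ℝ) ^ (-(1 + η)) ≤ 1 * (n : ℝ) ^ (-(1 + η)) := by
            gcongr; exact min_le_right _ _
        _ = n * (1 / (n : ℝ) ^ (2 + η)) := by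
            rw [one_mul, one_div, ← Real.rpow_neg hn0.le]
            nth_rewrite 2 [← Real.rpow_one (n : ℝ)]
            rw [← Real.rpow_add hn0]; congr 1; ring
        _ ≤ _ := by gcongr
  refine ⟨min c 1, lt_min hc one_pos, fun u v hu => ?_⟩
  have h5 : ((u.natAbs : ℕ) : ℝ) = |(u : ℝ)| := by
    rw [Nat.cast_natAbs]; push_cast; rfl
  have h6 := fun w => key u.natAbs w (Int.natAbs_pos.2 hu)
  rw [h5] at h6
  rcases abs_choice (u : ℝ) with h7 | h7
  · have := h6 v
    rwa [h7] at this ⊢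
  · have := h6 (-v)
    rw [h7] at this ⊢
    refine this.trans_eq ?_
    rw [← abs_neg]; congr 1; push_cast; ring

lemma ae_isGenericReal : ∀ᵐ ξ : ℝ ∂MeasureTheory.volume, IsGenericReal ξ := by
  have h : ∀ᵐ ξ : ℝ ∂MeasureTheory.volume, Irrational ξ :=
    (Set.countable_range ((↑) : ℚ → ℝ)).ae_notMem _
  filter_upwards [h, ae_not_liouvilleWith] with ξ h1 h2
  exact isGenericReal_of_not_liouvilleWith h1 h2

/-! ### Inhomogeneous approximation -/

/-- Inhomogeneous approximation through one reduced fraction `p / q` close to `ξ`: since `p` is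
invertible modulo `q`, every window of `q` consecutive integers contains some `u` with
`u p - v q = r` for a prescribed `r`, and then `u ξ - v = u (ξ - p / q) + r / q`. -/
lemma exists_int_near_of_rat (ξ : ℝ) (a : ℚ) (ha : |ξ - a| ≤ 1 / (a.den : ℝ) ^ 2) (Q ε : ℝ) :
    ∃ u v : ℤ, |(u : ℝ) - Q| ≤ a.den ∧ |(u : ℝ) * ξ - v - ε| ≤ 2 / a.den := by
  have hq : (0 : ℝ) < a.den := by exact_mod_cast a.den_pos
  set q : ℤ := (a.den : ℤ) with hqdef
  have hqz : 0 < q := Int.natCast_pos.2 a.den_pos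
  have hqr : (q : ℝ) = a.den := by simp [hqdef]
  rw [← hqr] at ha hq ⊢
  have haq : (a : ℝ) * q = a.num := by
    rw [hqr]; exact_mod_cast Rat.mul_den_eq_num a
  obtain ⟨r, hr⟩ : ∃ r : ℤ, |q * ε - Q * (q * (ξ - a)) - r| ≤ 1 / 2 := ⟨_, abs_sub_round _⟩
  have hcop : IsCoprime a.num q := by
    rw [Int.isCoprime_iff_nat_coprime]; simpa [hqdef] using a.reduced
  obtain ⟨s, t, hst⟩ := hcop
  -- `u ≡ r s` modulo `q`, with `u` in the window starting at `⌊Q⌋`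
  set k : ℤ := (r * s - ⌊Q⌋) / q with hk
  set m : ℤ := (r * s - ⌊Q⌋) % q with hm
  have hkm : r * s - ⌊Q⌋ = m + q * k := (Int.emod_add_mul_ediv _ _).symm
  have hm0 : 0 ≤ m := Int.emod_nonneg _ hqz.ne'
  have hmq : m + 1 ≤ q := Int.emod_lt_of_pos _ hqz
  have huQ : |((⌊Q⌋ + m : ℤ) : ℝ) - Q| ≤ q := by
    have h1 := Int.floor_le Q
    have h2 := Int.lt_floor_add_one Q
    have h3 : (0 : ℝ) ≤ m := by exact_mod_cast hm0
    have h4 : (m : ℝ) + 1 ≤ q := by exact_mod_cast hmq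
    push_cast
    rw [abs_le]; constructor <;> linarith
  refine ⟨⌊Q⌋ + m, -(r * t) - k * a.num, huQ, ?_⟩
  have hrel : (⌊Q⌋ + m) * a.num - (-(r * t) - k * a.num) * q = r := by
    have : ⌊Q⌋ + m = r * s - q * k := by linarith
    rw [this]; linear_combination r * hst
  generalize (-(r * t) - k * a.num) = v at hrel ⊢
  generalize (⌊Q⌋ + m) = u at hrel huQ ⊢
  have hrel' : (u : ℝ) * (a * q) - v * q = r := by rw [haq]; exact_mod_cast hrel
  have hmain : q * ((u : ℝ) * ξ - v - ε)
      = (u - Q) * (q * (ξ - a)) - (q * ε - Q * (q * (ξ - a)) - r) := by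
    linear_combination hrel'
  have hθ : |q * (ξ - a)| ≤ 1 / q := by
    rw [abs_mul, abs_of_pos hq]
    calc (q : ℝ) * |ξ - a| ≤ q * (1 / (q : ℝ) ^ 2) := by gcongr
      _ = 1 / q := by field_simp
  have hprod : |((u : ℝ) - Q) * (q * (ξ - a))| ≤ 1 := by
    rw [abs_mul]
    calc |(u : ℝ) - Q| * |q * (ξ - a)| ≤ q * (1 / q) := by gcongr
      _ = 1 := by field_simp
  have habs : |(u : ℝ) * ξ - v - ε| * q = |q * ((u : ℝ) * ξ - v - ε)| := by
    rw [abs_mul, abs_of_pos hq, mul_comm]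
  rw [le_div_iff₀ hq, habs, hmain]
  refine (abs_sub _ _).trans ?_
  linarith

/-- For every exponent `ρ < 1`, pairs `(Q, ε)` are approximated by `(u, u ξ - v)` with errors
`Q ^ σ`, `σ < 1`, and `O(Q ^ (-ρ))`. Dirichlet's theorem gives a fraction with denominator
`q ≤ Q ^ σ`, and genericity of `ξ` forces `q ≫ Q ^ ρ`. -/
lemma IsGenericReal.exists_approx {ξ : ℝ} (h : IsGenericReal ξ) {ρ : ℝ} (h0 : 0 < ρ) (h1 : ρ < 1) :
    ∃ σ C : ℝ, σ < 1 ∧ ∀ Q ε : ℝ, 1 ≤ Q → ∃ u v : ℤ,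
      |(u : ℝ) - Q| ≤ Q ^ σ ∧ |(u : ℝ) * ξ - v - ε| ≤ C * Q ^ (-ρ) := by
  obtain ⟨σ, hσ1, hσ2⟩ := exists_between h1
  have hσ0 : 0 < σ := h0.trans hσ1
  -- with `1 + η = σ / ρ`, the bound `q ^ (1 + η) ≫ Q ^ σ` amounts to `q ≫ Q ^ ρ`
  obtain ⟨c, hc, hcu⟩ := h (σ / ρ - 1) (by rw [sub_pos, one_lt_div h0]; exact hσ1)
  refine ⟨σ, 2 * (1 / c) ^ (ρ / σ), hσ2, fun Q ε hQ => ?_⟩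
  have hQ0 : 0 < Q := by linarith
  have hQσ : 1 ≤ Q ^ σ := Real.one_le_rpow hQ hσ0.le
  have hM : 0 < ⌊Q ^ σ⌋₊ := Nat.floor_pos.2 hQσ
  obtain ⟨a, ha, haM⟩ := Real.exists_rat_abs_sub_le_and_den_le ξ hM
  have hMle : (⌊Q ^ σ⌋₊ : ℝ) ≤ Q ^ σ := Nat.floor_le (by positivity)
  have hMlt : Q ^ σ < ⌊Q ^ σ⌋₊ + 1 := Nat.lt_floor_add_one _
  have hq : (0 : ℝ) < a.den := by exact_mod_cast a.den_pos
  have haM' : (a.den : ℝ) ≤ ⌊Q ^ σ⌋₊ := by exact_mod_cast haM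
  obtain ⟨u, v, hu, hv⟩ := exists_int_near_of_rat ξ a (ha.trans (by
    rw [sq]; gcongr; linarith)) Q ε
  refine ⟨u, v, by linarith, hv.trans ?_⟩
  have h2 := hcu a.den a.num (by exact_mod_cast a.den_pos.ne')
  have h3 : |((a.den : ℤ) : ℝ) * ξ - a.num| ≤ Q ^ (-σ) := by
    have haq : (a : ℝ) * a.den = a.num := by exact_mod_cast Rat.mul_den_eq_num a
    have h4 : ((a.den : ℤ) : ℝ) * ξ - a.num = a.den * (ξ - a) := by
      push_cast; rw [← haq]; ring
    rw [h4, abs_mul, abs_of_pos hq]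
    calc (a.den : ℝ) * |ξ - a| ≤ a.den * (1 / ((⌊Q ^ σ⌋₊ + 1) * a.den)) := by gcongr
      _ = 1 / (⌊Q ^ σ⌋₊ + 1) := by field_simp
      _ ≤ 1 / Q ^ σ := by gcongr
      _ = Q ^ (-σ) := by rw [Real.rpow_neg hQ0.le, one_div]
  have h5 := h2.trans h3
  rw [Int.cast_natCast, abs_of_pos hq, mul_comm, ← le_div_iff₀ hc] at h5
  have h6 := Real.rpow_le_rpow (by positivity) h5 (by positivity : 0 ≤ ρ / σ)
  rw [← Real.rpow_mul hq.le, div_eq_mul_one_div (Q ^ (-σ)), Real.mul_rpow (by positivity) (by positivity),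
    ← Real.rpow_mul hQ0.le] at h6
  have e1 : -(1 + (σ / ρ - 1)) * (ρ / σ) = -1 := by field_simp; ring
  have e2 : -σ * (ρ / σ) = -ρ := by field_simp
  rw [e1, e2, Real.rpow_neg_one] at h6
  rw [div_eq_mul_inv]
  linarith

/-- Every `τ < 1` is admissible: approximate `(Q n, ε n)` with an exponent `ρ > τ`, so that the
error `O(Q n ^ (-ρ))` is negligible compared with `ε n ≥ Q n ^ (-τ + o(1))`. -/
lemma IsGenericReal.mem_TSet''' {ξ τ : ℝ} (h : IsGenericReal ξ) (h0 : 0 < τ) (h1 : τ < 1) :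
    τ ∈ TSet''' ξ := by
  refine ⟨h0, fun Q ε hQ hε hQlim _ ⟨δ, hδ, hεQ⟩ => ?_⟩
  obtain ⟨ρ', h2, h2'⟩ := exists_between h1
  obtain ⟨ρ, h3, h3'⟩ := exists_between h2'
  obtain ⟨σ, C, hσ, happ⟩ := h.exists_approx (h0.trans (h2.trans h3)) h3'
  have hex : ∀ n, ∃ u v : ℤ, 1 ≤ Q n →
      |(u : ℝ) - Q n| ≤ Q n ^ σ ∧ |(u : ℝ) * ξ - v - ε n| ≤ C * Q n ^ (-ρ) := by
    intro n
    by_cases hn : 1 ≤ Q n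
    · obtain ⟨u, v, huv⟩ := happ (Q n) (ε n) hn
      exact ⟨u, v, fun _ => huv⟩
    · exact ⟨0, 0, fun h => absurd h hn⟩
  choose u v huv using hex
  have hQ1 : ∀ᶠ n in atTop, 1 ≤ Q n := hQlim.eventually_ge_atTop 1
  have hpow : ∀ s : ℝ, s < 0 → Tendsto (fun n => Q n ^ s) atTop (𝓝 0) := by
    intro s hs
    have := (tendsto_rpow_neg_atTop (neg_pos.2 hs)).comp hQlim
    simpa [Function.comp_def] using this
  refine ⟨u, v, ?_, ?_⟩
  · rw [tendsto_iff_norm_sub_tendsto_zero]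
    refine squeeze_zero' (Eventually.of_forall fun n => norm_nonneg _) ?_
      (hpow (σ - 1) (by linarith))
    filter_upwards [hQ1] with n hn
    have hp := hQ n
    rw [Real.norm_eq_abs, div_sub_one hp.ne', abs_div, abs_of_pos hp, Real.rpow_sub_one hp.ne']
    have := (huv n hn).1
    gcongr
  · rw [tendsto_iff_norm_sub_tendsto_zero]
    have hlim : Tendsto (fun n => |C| * Q n ^ (ρ' - ρ)) atTop (𝓝 0) := by
      simpa using (hpow (ρ' - ρ) (by linarith)).const_mul |C|
    refine squeeze_zero' (Eventually.of_forall fun n => norm_nonneg _) ?_ hlim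
    filter_upwards [hQ1, hδ.eventually_const_lt (show τ - ρ' < 0 by linarith)] with n hn hδn
    have hp := hQ n
    have he := hε n
    have h4 : Q n ^ (-ρ') ≤ ε n :=
      (Real.rpow_le_rpow_of_exponent_le hn (by linarith)).trans (hεQ n)
    rw [Real.norm_eq_abs, div_sub_one he.ne', abs_div, abs_of_pos he, div_le_iff₀ he]
    calc |(u n : ℝ) * ξ - v n - ε n| ≤ C * Q n ^ (-ρ) := (huv n hn).2
      _ ≤ |C| * Q n ^ (-ρ) := by gcongr; exact le_abs_self C
      _ = |C| * Q n ^ (ρ' - ρ) * Q n ^ (-ρ') := by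
        rw [mul_assoc, ← Real.rpow_add hp]; congr 2; ring
      _ ≤ _ := by gcongr

/-! ### The chain of inclusions -/

/-- Take `ε n = Q n ^ (-τ)`. -/
lemma TSet'''_subset_TSet'' (ξ : ℝ) : TSet''' ξ ⊆ TSet'' ξ := by
  rintro τ ⟨h0, h⟩
  refine ⟨h0, fun Q hmono hpos => ?_⟩
  have hQ0 : ∀ n, (0 : ℝ) < Q n := fun n => by exact_mod_cast hpos n
  have hQlim : Tendsto (fun n => (Q n : ℝ)) atTop atTop :=
    tendsto_natCast_atTop_atTop.comp hmono.tendsto_atTop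
  obtain ⟨u, v, hu, hv⟩ := h (fun n => Q n) (fun n => (Q n : ℝ) ^ (-τ)) hQ0
    (fun n => Real.rpow_pos_of_pos (hQ0 n) _) hQlim ((tendsto_rpow_neg_atTop h0).comp hQlim)
    ⟨fun _ => 0, tendsto_const_nhds, fun n => by simp⟩
  have hlog : Tendsto (fun n => Real.log (Q n)) atTop atTop := Real.tendsto_log_atTop.comp hQlim
  -- if `r n → 1`, then `r n = Q n ^ o(1)` with exponent `log (r n) / log (Q n)`
  have hexp : ∀ r : ℕ → ℝ, Tendsto r atTop (𝓝 1) →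
      Tendsto (fun n => Real.log (r n) / Real.log (Q n)) atTop (𝓝 0) := by
    intro r hr
    have h1 := hr.log one_ne_zero
    exact h1.div_atTop hlog
  have hpow : ∀ r : ℝ, 0 < r → ∀ n, 1 < (Q n : ℝ) →
      (Q n : ℝ) ^ (Real.log r / Real.log (Q n)) = r := by
    intro r hr n hn
    have := Real.log_pos hn
    rw [Real.rpow_def_of_pos (hQ0 n), mul_div_cancel₀ _ this.ne', Real.exp_log hr]
  let P : ℕ → Prop := fun n => 1 < (Q n : ℝ) ∧ 0 < (u n : ℝ) / Q n ∧
    0 < ((u n : ℝ) * ξ - v n) / (Q n : ℝ) ^ (-τ)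
  have hP : ∀ᶠ n in atTop, P n :=
    (hQlim.eventually_gt_atTop 1).and
      ((hu.eventually_const_lt one_pos).and (hv.eventually_const_lt one_pos))
  classical
  -- the finitely many exceptional indices use `u = 0`, `v = 1`
  refine ⟨fun n => if P n then u n else 0, fun n => if P n then v n else 1,
    ⟨_, hexp _ hu, fun n => ?_⟩,
    ⟨fun n => if P n then Real.log (((u n : ℝ) * ξ - v n) / (Q n : ℝ) ^ (-τ)) / Real.log (Q n)
      else τ, (hexp _ hv).congr' ?_, fun n => ?_⟩⟩
  · by_cases hn : P n
    · simp only [if_pos hn]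
      rw [Real.rpow_add (hQ0 n), Real.rpow_one, hpow _ hn.2.1 n hn.1, mul_div_cancel₀ _ (hQ0 n).ne',
        abs_of_pos ((div_pos_iff_of_pos_right (hQ0 n)).1 hn.2.1)]
    · simp only [if_neg hn, Int.cast_zero, abs_zero]
      exact (Real.rpow_pos_of_pos (hQ0 n) _).le
  · filter_upwards [hP] with n hn
    rw [if_pos hn]
  · by_cases hn : P n
    · simp only [if_pos hn]
      have hp := Real.rpow_pos_of_pos (hQ0 n) (-τ)
      rw [Real.rpow_add (hQ0 n), hpow _ hn.2.2 n hn.1, mul_div_cancel₀ _ hp.ne',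
        abs_of_pos ((div_pos_iff_of_pos_right hp).1 hn.2.2)]
    · simp [if_neg hn]

/-- Take `Q n = 2 ^ n`, `α = 2 ^ (-τ)` and `β = 2`. -/
lemma TSet''_subset_TSet' (ξ : ℝ) : TSet'' ξ ⊆ TSet' ξ := by
  rintro τ ⟨h0, h⟩
  obtain ⟨u, v, ⟨δ₁, hδ₁, hu⟩, ⟨δ₂, hδ₂, hv⟩⟩ :=
    h (fun n => 2 ^ n) (pow_right_strictMono₀ (by norm_num)) (fun n => by positivity)
  have hroot : ∀ n : ℕ, 0 < n → ∀ s : ℝ, (((2 ^ n : ℕ) : ℝ) ^ s) ^ (1 / (n : ℝ)) = 2 ^ s := by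
    intro n hn s
    have : (0 : ℝ) < n := by exact_mod_cast hn
    push_cast
    rw [← Real.rpow_natCast, ← Real.rpow_mul (by norm_num), ← Real.rpow_mul (by norm_num)]
    congr 1; field_simp
  have hlim : ∀ (δ : ℕ → ℝ) (s : ℝ), Tendsto δ atTop (𝓝 0) →
      Tendsto (fun n => (2 : ℝ) ^ (s + δ n)) atTop (𝓝 (2 ^ s)) := by
    intro δ s hδ
    simpa [Function.comp_def] using
      ((Real.continuous_const_rpow (two_ne_zero : (2 : ℝ) ≠ 0)).tendsto _).comp (hδ.const_add s)
  refine ⟨h0, u, v, 2 ^ (-τ), 2, by positivity,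
    Real.rpow_lt_one_of_one_lt_of_neg one_lt_two (by linarith), one_lt_two, ?_, ?_, ?_⟩
  · refine (hlim δ₂ (-τ) hδ₂).congr' ?_
    filter_upwards [eventually_gt_atTop 0] with n hn
    rw [hv n, hroot n hn]
  · have h1 := (continuous_coe_real_ereal.tendsto _).comp (hlim δ₁ 1 hδ₁)
    rw [Real.rpow_one] at h1
    rw [← h1.limsup_eq]
    refine limsup_le_limsup ?_
    filter_upwards [eventually_gt_atTop 0] with n hn
    simp only [Function.comp_apply, EReal.coe_le_coe_iff]
    rw [← hroot n hn]
    exact Real.rpow_le_rpow (abs_nonneg _) (hu n) (by positivity)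
  · rw [Real.log_rpow two_pos]
    have := Real.log_pos (one_lt_two : (1 : ℝ) < 2)
    field_simp

/-- The same sequences work once finitely many initial terms are dropped. Since `0 < α < 1`, the
remaining `u n ξ - v n` lie strictly between `0` and `1` in absolute value, so that `u n ≠ 0`. -/
lemma TSet'_subset_TSet (ξ : ℝ) : TSet' ξ ⊆ TSet ξ := by
  rintro τ ⟨h0, u, v, α, β, hα0, hα1, hβ, hx, hu, hτ⟩
  set x : ℕ → ℝ := fun n => |(u n : ℝ) * ξ - v n| with hxdef
  have hlogβ : 0 < Real.log β := Real.log_pos hβ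
  have hlogα : Real.log α < 0 := Real.log_neg hα0 hα1
  -- `log (x n) = n * A n` with `A n → log α`
  set A : ℕ → ℝ := fun n => Real.log (x n ^ (1 / (n : ℝ))) with hA
  have hAlim : Tendsto A atTop (𝓝 (Real.log α)) := hx.log hα0.ne'
  obtain ⟨N, hN⟩ := eventually_atTop.1 ((eventually_gt_atTop 0).and
    ((hx.eventually_lt_const hα1).and ((hx.eventually_const_lt hα0).and
      (hAlim.eventually_lt_const hlogα))))
  have hn0 : ∀ n, N ≤ n → (0 : ℝ) < n := fun n hn => by exact_mod_cast (hN n hn).1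
  have hx1 : ∀ n, N ≤ n → x n < 1 := by
    intro n hn
    by_contra! hc
    exact absurd (hN n hn).2.1 (not_lt.2 (Real.one_le_rpow hc (by positivity)))
  have hx0 : ∀ n, N ≤ n → 0 < x n := by
    intro n hn
    refine lt_of_le_of_ne (abs_nonneg _) fun hc => ?_
    have h1 := (hN n hn).2.2.1
    change 0 < x n ^ _ at h1
    rw [← hc, Real.zero_rpow (one_div_pos.2 (hn0 n hn)).ne'] at h1
    exact lt_irrefl _ h1
  have hlogx : ∀ n, N ≤ n → Real.log (x n) = n * A n := by
    intro n hn
    have := hn0 n hn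
    rw [hA]; simp only
    rw [Real.log_rpow (hx0 n hn)]; field_simp
  -- `u n = 0` would make `x n` an integer strictly between `0` and `1`
  have hu0 : ∀ n, N ≤ n → u n ≠ 0 := by
    intro n hn hc
    have h1 := hx0 n hn
    have h2 := hx1 n hn
    simp only [hxdef, hc, Int.cast_zero, zero_mul, zero_sub, abs_neg] at h1 h2
    have h3 : (0 : ℤ) < |v n| := by exact_mod_cast h1
    have h4 : |v n| < 1 := by exact_mod_cast h2
    omega
  have hxlim : Tendsto x atTop (𝓝 0) := by
    have h1 : Tendsto (fun n : ℕ => (n : ℝ) * A n) atTop atBot :=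
      tendsto_natCast_atTop_atTop.atTop_mul_neg hlogα hAlim
    refine (Real.tendsto_exp_atBot.comp h1).congr' ?_
    filter_upwards [eventually_ge_atTop N] with n hn
    rw [Function.comp_apply, ← hlogx n hn, Real.exp_log (hx0 n hn)]
  -- `log |u n| ≤ n * E n` with `E n → log β`
  set E : ℕ → ℝ := fun n => max (Real.log β) (Real.log (|(u n : ℝ)| ^ (1 / (n : ℝ)))) with hE
  have hElim : Tendsto E atTop (𝓝 (Real.log β)) := by
    refine tendsto_order.2 ⟨fun a ha => Eventually.of_forall fun n => ha.trans_le (le_max_left _ _),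
      fun b hb => ?_⟩
    have h1 : (β : EReal) < (Real.exp b : ℝ) := by
      rw [EReal.coe_lt_coe_iff]; exact (Real.log_lt_iff_lt_exp (by linarith)).1 hb
    filter_upwards [eventually_lt_of_limsup_lt (hu.trans_lt h1), eventually_ge_atTop N] with n hn hnN
    refine max_lt hb ?_
    have h2 : 0 < |(u n : ℝ)| := abs_pos.2 (by exact_mod_cast hu0 n hnN)
    rw [Real.log_lt_iff_lt_exp (by positivity)]
    exact_mod_cast hn
  have hEpos : ∀ n, 0 < E n := fun n => hlogβ.trans_le (le_max_left _ _)
  have hlogu : ∀ n, N ≤ n → Real.log |(u n : ℝ)| ≤ n * E n := by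
    intro n hn
    have h1 := hn0 n hn
    have h2 : 0 < |(u n : ℝ)| := abs_pos.2 (by exact_mod_cast hu0 n hn)
    have h3 : Real.log |(u n : ℝ)| = n * Real.log (|(u n : ℝ)| ^ (1 / (n : ℝ))) := by
      rw [Real.log_rpow h2]; field_simp
    rw [h3]
    gcongr
    exact le_max_right _ _
  have hsh : Tendsto (fun n => n + N) atTop atTop := tendsto_add_atTop_nat N
  have hsh1 : Tendsto (fun n => n + N + 1) atTop atTop := tendsto_add_atTop_nat (N + 1)
  refine ⟨h0, fun n => u (n + N), fun n => v (n + N), fun n => hu0 _ (Nat.le_add_left _ _), ?_, ?_,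
    ?_⟩
  · exact (tendsto_zero_iff_abs_tendsto_zero _).2 (hxlim.comp hsh)
  · refine ⟨fun n => (1 + 1 / ((n + N : ℕ) : ℝ)) * (A (n + N + 1) / A (n + N)) - 1, ?_, fun n => ?_⟩
    · have h1 : Tendsto (fun n : ℕ => 1 + 1 / ((n + N : ℕ) : ℝ)) atTop (𝓝 (1 + 0)) :=
        (tendsto_one_div_atTop_nhds_zero_nat.comp hsh).const_add 1
      have h2 := (h1.mul ((hAlim.comp hsh1).div (hAlim.comp hsh) hlogα.ne)).sub_const 1
      rw [div_self hlogα.ne] at h2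
      simpa using h2
    · have hm : N ≤ n + N := Nat.le_add_left _ _
      have hm1 : N ≤ n + N + 1 := by omega
      have e : n + 1 + N = n + N + 1 := by ring
      simp only [e]
      change x (n + N + 1) = x (n + N) ^ _
      rw [← Real.exp_log (hx0 _ hm1), Real.rpow_def_of_pos (hx0 _ hm), hlogx _ hm1, hlogx _ hm]
      have h1 := hn0 _ hm
      have h2 := (hN _ hm).2.2.2.ne
      congr 1
      generalize n + N = m at h1 h2 ⊢
      push_cast
      field_simp
      ring
  · refine ⟨fun n => τ + A (n + N) / E (n + N), ?_, fun n => ?_⟩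
    · have h2 := ((hAlim.comp hsh).div (hElim.comp hsh) hlogβ.ne').const_add τ
      have e : τ + Real.log α / Real.log β = 0 := by rw [hτ]; ring
      rw [e] at h2
      exact h2
    · have hm : N ≤ n + N := Nat.le_add_left _ _
      change x (n + N) ≤ |(u (n + N) : ℝ)| ^ (-τ + (τ + A (n + N) / E (n + N)))
      generalize n + N = m at hm ⊢
      have h1 := hEpos m
      have h2 : 0 < |(u m : ℝ)| := abs_pos.2 (by exact_mod_cast hu0 m hm)
      rw [neg_add_cancel_left, ← Real.exp_log (hx0 m hm), Real.rpow_def_of_pos h2, hlogx m hm,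
        Real.exp_le_exp]
      calc (m : ℝ) * A m = (m * E m) * (A m / E m) := by field_simp
        _ ≤ _ := mul_le_mul_of_nonpos_right (hlogu m hm)
          (div_nonpos_of_nonpos_of_nonneg (hN m hm).2.2.2.le h1.le)

/-! ### The upper bound -/

lemma IsGenericReal.le_one_of_mem_TSet {ξ τ : ℝ} (h : IsGenericReal ξ) (hτ : τ ∈ TSet ξ) :
    τ ≤ 1 := by
  obtain ⟨-, u, v, hu0, hlim, -, δ, hδ, hle⟩ := hτ
  by_contra! h1
  obtain ⟨η, hη, hητ⟩ : ∃ η : ℝ, 0 < η ∧ τ = 1 + 2 * η := ⟨(τ - 1) / 2, by linarith, by ring⟩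
  obtain ⟨c, hc, hcu⟩ := h η hη
  set s : ℝ := η / (2 * (1 + η)) with hs
  have hs0 : 0 < s := by positivity
  have hlim' : Tendsto (fun n => (|(u n : ℝ) * ξ - v n| / c) ^ s) atTop (𝓝 0) := by
    have h2 := (hlim.abs.div_const c).rpow_const (p := s) (Or.inr hs0.le)
    simpa [Real.zero_rpow hs0.ne'] using h2
  -- `c |u| ^ (-(1 + η)) ≤ |u ξ - v| ≤ |u| ^ (-(1 + 2 η) + o(1))` bounds `c` by `|u| ^ (-η / 2)`,
  -- hence by a positive power of `|u ξ - v| / c`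
  have hcle : ∀ᶠ n in atTop, c ≤ (|(u n : ℝ) * ξ - v n| / c) ^ s := by
    filter_upwards [hδ.eventually_lt_const (show 0 < η / 2 by positivity)] with n hn
    have hu1 : 1 ≤ |(u n : ℝ)| := by exact_mod_cast Int.one_le_abs (hu0 n)
    have hup : 0 < |(u n : ℝ)| := by linarith
    have h2 := hcu (u n) (v n) (hu0 n)
    have h3 := h2.trans (hle n)
    have h4 : c ≤ |(u n : ℝ)| ^ (-(η / 2)) := by
      calc c = c * |(u n : ℝ)| ^ (-(1 + η)) * |(u n : ℝ)| ^ (1 + η) := by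
            rw [mul_assoc, ← Real.rpow_add hup, neg_add_cancel, Real.rpow_zero, mul_one]
        _ ≤ |(u n : ℝ)| ^ (-τ + δ n) * |(u n : ℝ)| ^ (1 + η) := by gcongr
        _ = |(u n : ℝ)| ^ (-τ + δ n + (1 + η)) := by rw [← Real.rpow_add hup]
        _ ≤ _ := Real.rpow_le_rpow_of_exponent_le hu1 (by linarith)
    have h5 : |(u n : ℝ)| ^ (-(1 + η)) ≤ |(u n : ℝ) * ξ - v n| / c := by
      rw [le_div_iff₀ hc]; linarith
    have h6 := Real.rpow_le_rpow (by positivity) h5 hs0.le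
    rw [← Real.rpow_mul hup.le] at h6
    have e : -(1 + η) * s = -(η / 2) := by rw [hs]; field_simp
    rw [e] at h6
    exact h4.trans h6
  exact absurd (ge_of_tendsto hlim' hcle) (not_le.2 hc)

lemma sSup_eq_one_of_Ioo_subset {S : Set ℝ} (h1 : ∀ τ ∈ S, τ ≤ 1)
    (h2 : ∀ τ : ℝ, 0 < τ → τ < 1 → τ ∈ S) : sSup S = 1 := by
  refine csSup_eq_of_forall_le_of_forall_lt_exists_gt ⟨1 / 2, h2 _ (by norm_num) (by norm_num)⟩ h1
    fun w hw => ?_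
  obtain ⟨t, ht1, ht2⟩ := exists_between (max_lt one_pos hw)
  exact ⟨t, h2 t ((le_max_left _ _).trans_lt ht1) ht2, (le_max_right _ _).trans_lt ht1⟩

theorem tau_exponents_eq_one_ae :
    ∀ᵐ ξ : ℝ ∂MeasureTheory.volume,
      tauExp''' ξ = 1 ∧ tauExp'' ξ = 1 ∧ tauExp' ξ = 1 ∧ tauExp ξ = 1 := by
  filter_upwards [ae_isGenericReal] with ξ h
  have h1 : ∀ τ ∈ TSet ξ, τ ≤ 1 := fun τ => h.le_one_of_mem_TSet
  have h2 : TSet''' ξ ⊆ TSet'' ξ := TSet'''_subset_TSet'' ξ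
  have h3 : TSet'' ξ ⊆ TSet' ξ := TSet''_subset_TSet' ξ
  have h4 : TSet' ξ ⊆ TSet ξ := TSet'_subset_TSet ξ
  have h5 : ∀ τ : ℝ, 0 < τ → τ < 1 → τ ∈ TSet''' ξ := fun τ => h.mem_TSet'''
  exact ⟨sSup_eq_one_of_Ioo_subset (fun τ hτ => h1 τ (h4 (h3 (h2 hτ)))) h5,
    sSup_eq_one_of_Ioo_subset (fun τ hτ => h1 τ (h4 (h3 hτ))) fun τ a b => h2 (h5 τ a b),
    sSup_eq_one_of_Ioo_subset (fun τ hτ => h1 τ (h4 hτ)) fun τ a b => h3 (h2 (h5 τ a b)),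
    sSup_eq_one_of_Ioo_subset h1 fun τ a b => h4 (h3 (h2 (h5 τ a b)))⟩
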